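/- Let T be a non-degenerate triangle in the plane and let ε > 0 be smaller than every angle of T. Then there exists a real number L ≥ 1/24 such that the sequence h(n, T, ε)/n³ converges to L as n → ∞, and moreover for every natural number n one has L·(n³ − n) ≥ h(n, T, ε) ≥ L·n·(n − 1)·(n − 2). -/

import Mathlib

open EuclideanGeometry

noncomputable section

abbrev Plane := EuclideanSpace ℝ (Fin 2)

/-- A triple of points is a (non-degenerate) triangle if its points are not collinear. -/
def IsTriangle (p : Fin 3 → Plane) : Prop := ¬ Collinear ℝ (Set.range p)

/-- The angle of the triple `p` at its `i`-th vertex. -/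
noncomputable def triAngle (p : Fin 3 → Plane) (i : Fin 3) : ℝ :=
  EuclideanGeometry.angle (p (i + 1)) (p i) (p (i + 2))

/-- `p` is ε-similar to `T`: some correspondence of vertices makes corresponding
angles differ by less than ε. -/
def EpsSimilar (ε : ℝ) (p T : Fin 3 → Plane) : Prop :=
  ∃ σ : Equiv.Perm (Fin 3), ∀ i, |triAngle p i - triAngle T (σ i)| < ε

/-- The finite set `S` forms a triangle ε-similar to `T`. -/
def FormsSimilar (ε : ℝ) (T : Fin 3 → Plane) (S : Finset Plane) : Prop :=
  ∃ p : Fin 3 → Plane, (S : Set Plane) = Set.range p ∧ IsTriangle p ∧ EpsSimilar ε p T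

/-- The number of 3-element subsets of `P` forming a triangle ε-similar to `T`. -/
noncomputable def simCount (ε : ℝ) (T : Fin 3 → Plane) (P : Finset Plane) : ℕ :=
  Set.ncard {S : Finset Plane | S ⊆ P ∧ S.card = 3 ∧ FormsSimilar ε T S}

/-- `hGeo n T ε` = maximum over `n`-point sets `P` of the number of 3-element
subsets of `P` forming a triangle ε-similar to `T`. -/
noncomputable def hGeo (n : ℕ) (T : Fin 3 → Plane) (ε : ℝ) : ℕ :=
  sSup {m | ∃ P : Finset Plane, P.card = n ∧ simCount ε T P = m}

/-- The recurrence defining the sequence `h`. -/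
def HRec (h : ℕ → ℕ) : Prop :=
  h 0 = 0 ∧ h 1 = 0 ∧ h 2 = 0 ∧
  ∀ n, 3 ≤ n → IsGreatest
    {m | ∃ a b c : ℕ, a + b + c = n ∧ a ≤ n - 1 ∧ b ≤ n - 1 ∧ c ≤ n - 1 ∧
      m = a * b * c + h a + h b + h c} (h n)

lemma blowup_count {α β γ : Type*} [DecidableEq γ] (P : Finset α) (Q : Finset β)
    (E1 : Finset (Finset α)) (E2 : Finset (Finset β)) (o : Finset α → Fin 3 → α)
    (ho : ∀ S ∈ E1, (S : Set α) = Set.range (o S))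
    (hoinj : ∀ S ∈ E1, Function.Injective (o S))
    (hE1 : ∀ S ∈ E1, S ⊆ P) (hE2 : ∀ S ∈ E2, S ⊆ Q ∧ S.card = 3)
    (F : Finset (Finset γ)) (f : α → β → γ)
    (hf : ∀ p ∈ P, ∀ q ∈ Q, ∀ p' ∈ P, ∀ q' ∈ Q, f p q = f p' q' → p = p' ∧ q = q')
    (hA : ∀ S ∈ E1, ∀ g : Fin 3 → β, (∀ i, g i ∈ Q) →
      Finset.univ.image (fun i => f (o S i) (g i)) ∈ F)
    (hB : ∀ p ∈ P, ∀ S ∈ E2, S.image (fun q => f p q) ∈ F) :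
    E1.card * Q.card ^ 3 + P.card * E2.card ≤ F.card := by
  have hoP : ∀ S ∈ E1, ∀ i, o S i ∈ P := by
    intro S hS i
    apply hE1 S hS
    have : o S i ∈ (S : Set α) := by rw [ho S hS]; exact ⟨i, rfl⟩
    exact this
  have hcard : ((E1 ×ˢ Fintype.piFinset (fun _ : Fin 3 => Q)).disjSum (P ×ˢ E2)).card
      = E1.card * Q.card ^ 3 + P.card * E2.card := by
    simp
  rw [← hcard]
  have key : ∀ S ∈ E1, ∀ g : Fin 3 → β, (∀ i, g i ∈ Q) → ∀ S' ∈ E1, ∀ g' : Fin 3 → β,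
      (∀ i, g' i ∈ Q) → Finset.univ.image (fun i => f (o S i) (g i)) =
        Finset.univ.image (fun i => f (o S' i) (g' i)) →
      ∀ i, ∃ j, o S' j = o S i ∧ g' j = g i := by
    intro S hS g hg S' hS' g' hg' h i
    have : f (o S i) (g i) ∈ Finset.univ.image (fun i => f (o S' i) (g' i)) := by
      rw [← h]; simp
    simp only [Finset.mem_image, Finset.mem_univ, true_and] at this
    obtain ⟨j, hj⟩ := this
    exact ⟨j, hf _ (hoP S' hS' j) _ (hg' j) _ (hoP S hS i) _ (hg i) hj⟩
  have key2 : ∀ S ∈ E1, ∀ g : Fin 3 → β, (∀ i, g i ∈ Q) → ∀ p ∈ P, ∀ S' ∈ E2,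
      Finset.univ.image (fun i => f (o S i) (g i)) = S'.image (fun q => f p q) → False := by
    intro S hS g hg p hp S' hS' h
    have hh : ∀ i, o S i = p := by
      intro i
      have : f (o S i) (g i) ∈ S'.image (fun q => f p q) := by
        rw [← h]; simp
      simp only [Finset.mem_image] at this
      obtain ⟨q, hq, hj⟩ := this
      exact (hf _ hp _ ((hE2 S' hS').1 hq) _ (hoP S hS i) _ (hg i) hj).1.symm
    have := hoinj S hS ((hh 0).trans (hh 1).symm)
    simp at this
  have key3 : ∀ p ∈ P, ∀ S ∈ E2, ∀ p' ∈ P, ∀ S' ∈ E2,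
      S.image (fun q => f p q) = S'.image (fun q => f p' q) → ∀ q ∈ S, p = p' ∧ q ∈ S' := by
    intro p hp S hS p' hp' S' hS' h q hq
    have : f p q ∈ S'.image (fun q => f p' q) := by
      rw [← h]; exact Finset.mem_image_of_mem _ hq
    simp only [Finset.mem_image] at this
    obtain ⟨q', hq', hj⟩ := this
    obtain ⟨h1, h2⟩ := hf _ hp' _ ((hE2 S' hS').1 hq') _ hp _ ((hE2 S hS).1 hq) hj
    exact ⟨h1.symm, h2 ▸ hq'⟩
  apply Finset.card_le_card_of_injOn
    (Sum.elim (fun x => Finset.univ.image (fun i => f (o x.1 i) (x.2 i)))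
      (fun x => x.2.image (fun q => f x.1 q)))
  · rintro (⟨S, g⟩ | ⟨p, S⟩) hx
    · simp at hx
      exact hA S hx.1 g hx.2
    · simp at hx
      exact hB p hx.1 S hx.2
  · rintro (⟨S, g⟩ | ⟨p, S⟩) hx (⟨S', g'⟩ | ⟨p', S'⟩) hy hxy
    · simp only [Finset.mem_coe, Finset.inl_mem_disjSum, Finset.mem_product,
        Fintype.mem_piFinset] at hx hy
      simp only [Sum.elim_inl] at hxy
      have k1 := key S hx.1 g hx.2 S' hy.1 g' hy.2 hxy
      have k2 := key S' hy.1 g' hy.2 S hx.1 g hx.2 hxy.symm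
      have hSS : S = S' := by
        apply Finset.coe_injective
        rw [ho S hx.1, ho S' hy.1]
        apply Set.Subset.antisymm
        · rintro _ ⟨i, rfl⟩
          obtain ⟨j, hj, _⟩ := k1 i
          exact ⟨j, hj⟩
        · rintro _ ⟨i, rfl⟩
          obtain ⟨j, hj, _⟩ := k2 i
          exact ⟨j, hj⟩
      subst hSS
      have : g = g' := by
        funext i
        obtain ⟨j, hj, hg⟩ := k1 i
        rw [← hg, hoinj S hx.1 hj]
      rw [this]
    · simp only [Finset.mem_coe, Finset.inl_mem_disjSum, Finset.inr_mem_disjSum,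
        Finset.mem_product, Fintype.mem_piFinset] at hx hy
      exact (key2 S hx.1 g hx.2 p' hy.1 S' hy.2 hxy).elim
    · simp only [Finset.mem_coe, Finset.inl_mem_disjSum, Finset.inr_mem_disjSum,
        Finset.mem_product, Fintype.mem_piFinset] at hx hy
      exact (key2 S' hy.1 g' hy.2 p hx.1 S hx.2 hxy.symm).elim
    · simp only [Finset.mem_coe, Finset.inr_mem_disjSum, Finset.mem_product] at hx hy
      have k1 := key3 p hx.1 S hx.2 p' hy.1 S' hy.2 hxy
      have k2 := key3 p' hy.1 S' hy.2 p hx.1 S hx.2 hxy.symm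
      have hne : S.Nonempty := by
        rw [← Finset.card_pos, (hE2 S hx.2).2]; norm_num
      obtain ⟨q, hq⟩ := hne
      have h1 := (k1 q hq).1
      have h2 : S = S' := Finset.Subset.antisymm (fun q hq => (k1 q hq).2)
        (fun q hq => (k2 q hq).2)
      rw [h1, h2]

def Good (ε : ℝ) (T p : Fin 3 → Plane) : Prop := IsTriangle p ∧ EpsSimilar ε p T

lemma IsTriangle.aff {p : Fin 3 → Plane} (h : IsTriangle p) : AffineIndependent ℝ p :=
  affineIndependent_iff_not_collinear.2 h

lemma IsTriangle.inj {p : Fin 3 → Plane} (h : IsTriangle p) : Function.Injective p :=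
  h.aff.injective

lemma good_eventually {ε : ℝ} {T p : Fin 3 → Plane} (h : Good ε T p) :
    ∀ᶠ p' in nhds p, Good ε T p' := by
  obtain ⟨h1, σ, hσ⟩ := h
  have e1 : ∀ᶠ p' in nhds p, AffineIndependent ℝ p' :=
    (isOpen_setOfPred_affineIndependent (𝕜 := ℝ) (E := Plane) (ι := Fin 3)).mem_nhds h1.aff
  have e2 : ∀ i, ∀ᶠ p' in nhds p, |triAngle p' i - triAngle T (σ i)| < ε := by
    intro i
    have hc : ContinuousAt (fun p' : Fin 3 → Plane => triAngle p' i) p := by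
      unfold triAngle
      have h12 : p (i + 1) ≠ p i := fun h => by
        have := h1.inj h
        revert this; fin_cases i <;> decide
      have h32 : p (i + 2) ≠ p i := fun h => by
        have := h1.inj h
        revert this; fin_cases i <;> decide
      have := EuclideanGeometry.continuousAt_angle (x := (p (i+1), p i, p (i+2))) h12 h32
      exact ContinuousAt.comp (f := fun p' : Fin 3 → Plane => (p' (i+1), p' i, p' (i+2)))
        this (by fun_prop)
    have : ContinuousAt (fun p' : Fin 3 → Plane => |triAngle p' i - triAngle T (σ i)|) p :=
      (hc.sub continuousAt_const).abs
    exact this.eventually_lt continuousAt_const (hσ i)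
  filter_upwards [e1, Filter.eventually_all.2 e2] with p' h1' h2'
  exact ⟨affineIndependent_iff_not_collinear.1 h1', σ, h2'⟩

lemma good_scale {ε : ℝ} {T p : Fin 3 → Plane} (h : Good ε T p) (a : Plane) {δ : ℝ}
    (hδ : δ ≠ 0) : Good ε T (fun i => a + δ • p i) := by
  obtain ⟨h1, σ, hσ⟩ := h
  refine ⟨?_, σ, fun i => ?_⟩
  · apply affineIndependent_iff_not_collinear.1
    have := h1.aff.map' (AffineMap.const ℝ Plane a + δ • AffineMap.id ℝ Plane) (by
      intro x y hxy
      simpa [hδ] using hxy)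
    exact this
  · have : triAngle (fun i => a + δ • p i) i = triAngle p i := by
      unfold triAngle
      rw [EuclideanGeometry.angle_const_add]
      simp only [EuclideanGeometry.angle, vsub_eq_sub, ← smul_sub]
      exact InnerProductGeometry.angle_smul_smul hδ _ _
    rw [this]; exact hσ i

open Classical in
def simFam (ε : ℝ) (T : Fin 3 → Plane) (P : Finset Plane) : Finset (Finset Plane) :=
  (P.powersetCard 3).filter (FormsSimilar ε T)

lemma mem_simFam {ε : ℝ} {T : Fin 3 → Plane} {P S : Finset Plane} :
    S ∈ simFam ε T P ↔ S ⊆ P ∧ S.card = 3 ∧ FormsSimilar ε T S := by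
  simp [simFam, Finset.mem_powersetCard, and_assoc]

lemma simCount_eq (ε : ℝ) (T : Fin 3 → Plane) (P : Finset Plane) :
    simCount ε T P = (simFam ε T P).card := by
  unfold simCount
  rw [← Set.ncard_coe_finset]
  congr 1
  ext S
  simp [mem_simFam]

lemma simCount_le (ε : ℝ) (T : Fin 3 → Plane) (P : Finset Plane) :
    simCount ε T P ≤ P.card.choose 3 := by
  classical
  rw [simCount_eq, ← Finset.card_powersetCard]
  apply Finset.card_le_card
  intro S hS
  obtain ⟨h1, h2, _⟩ := mem_simFam.1 hS
  exact Finset.mem_powersetCard.2 ⟨h1, h2⟩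

lemma hGeo_bdd (n : ℕ) (T : Fin 3 → Plane) (ε : ℝ) :
    BddAbove {m | ∃ P : Finset Plane, P.card = n ∧ simCount ε T P = m} := by
  refine ⟨n.choose 3, ?_⟩
  rintro m ⟨P, rfl, rfl⟩
  exact simCount_le ε T P

lemma le_hGeo (T : Fin 3 → Plane) (ε : ℝ) (P : Finset Plane) :
    simCount ε T P ≤ hGeo P.card T ε :=
  le_csSup (hGeo_bdd _ T ε) ⟨P, rfl, rfl⟩

lemma exists_hGeo (n : ℕ) (T : Fin 3 → Plane) (ε : ℝ) :
    ∃ P : Finset Plane, P.card = n ∧ simCount ε T P = hGeo n T ε := by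
  have hne : {m | ∃ P : Finset Plane, P.card = n ∧ simCount ε T P = m}.Nonempty := by
    have : Infinite Plane := Module.Free.infinite ℝ Plane
    obtain ⟨s, hs⟩ := Infinite.exists_subset_card_eq Plane n
    exact ⟨_, s, hs, rfl⟩
  exact Nat.sSup_mem hne (hGeo_bdd n T ε)

lemma good_forms [DecidableEq Plane] {ε : ℝ} {T p : Fin 3 → Plane} (h : Good ε T p) :
    (Finset.univ.image p).card = 3 ∧ FormsSimilar ε T (Finset.univ.image p) := by
  refine ⟨?_, p, by simp, h.1, h.2⟩
  rw [Finset.card_image_of_injective _ h.1.inj]; simp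

lemma hGeo_blowup (n m : ℕ) (T : Fin 3 → Plane) (ε : ℝ) :
    hGeo n T ε * m ^ 3 + n * hGeo m T ε ≤ hGeo (n * m) T ε := by
  classical
  obtain ⟨P, hPc, hP⟩ := exists_hGeo n T ε
  obtain ⟨Q, hQc, hQ⟩ := exists_hGeo m T ε
  have hex : ∀ S : Finset Plane, ∃ o : Fin 3 → Plane, S ∈ simFam ε T P →
      (S : Set Plane) = Set.range o ∧ Good ε T o := by
    intro S
    by_cases hS : S ∈ simFam ε T P
    · obtain ⟨_, _, p, h1, h2, h3⟩ := mem_simFam.1 hS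
      exact ⟨p, fun _ => ⟨h1, h2, h3⟩⟩
    · exact ⟨T, fun h => (hS h).elim⟩
  choose o ho using hex
  have evA : ∀ᶠ δ : ℝ in nhds 0, ∀ S ∈ simFam ε T P,
      ∀ g ∈ Fintype.piFinset (fun _ : Fin 3 => Q), Good ε T (fun i => o S i + δ • g i) := by
    rw [Filter.eventually_all_finset]
    intro S hS
    rw [Filter.eventually_all_finset]
    intro g _
    have hc : Filter.Tendsto (fun δ : ℝ => (fun i => o S i + δ • g i : Fin 3 → Plane))
        (nhds 0) (nhds (o S)) := by
      have : Continuous (fun δ : ℝ => (fun i => o S i + δ • g i : Fin 3 → Plane)) := by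
        fun_prop
      have h := this.tendsto 0
      simpa using h
    exact hc.eventually (good_eventually (ho S hS).2)
  have evI : ∀ᶠ δ : ℝ in nhds 0, ∀ p ∈ P, ∀ p' ∈ P, ∀ q ∈ Q, ∀ q' ∈ Q, p ≠ p' →
      p + δ • q ≠ p' + δ • q' := by
    simp only [Filter.eventually_all_finset]
    intro p _ p' _ q _ q' _
    by_cases hpp : p = p'
    · simp [hpp]
    · have h1 : Continuous (fun δ : ℝ => p + δ • q) := by fun_prop
      have h2 : Continuous (fun δ : ℝ => p' + δ • q') := by fun_prop
      have : ∀ᶠ δ : ℝ in nhds 0, p + δ • q ≠ p' + δ • q' :=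
        (isOpen_ne_fun h1 h2).mem_nhds (by simpa using hpp)
      filter_upwards [this] with δ h _ using h
  have ev0 : ∀ᶠ δ : ℝ in nhdsWithin 0 {0}ᶜ, δ ≠ 0 := self_mem_nhdsWithin
  obtain ⟨δ, ⟨hA, hI⟩, hδ⟩ :=
    (((evA.and evI).filter_mono nhdsWithin_le_nhds).and ev0).exists
  have hf : ∀ p ∈ P, ∀ q ∈ Q, ∀ p' ∈ P, ∀ q' ∈ Q, p + δ • q = p' + δ • q' →
      p = p' ∧ q = q' := by
    intro p hp q hq p' hp' q' hq' h
    have h1 : p = p' := by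
      by_contra hne
      exact hI p hp p' hp' q hq q' hq' hne h
    subst h1
    refine ⟨rfl, ?_⟩
    simpa [hδ] using h
  let R : Finset Plane := (P ×ˢ Q).image (fun x => x.1 + δ • x.2)
  have hR : R.card = n * m := by
    rw [Finset.card_image_of_injOn, Finset.card_product, hPc, hQc]
    rintro ⟨p, q⟩ hx ⟨p', q'⟩ hy h
    simp only [Finset.mem_coe, Finset.mem_product] at hx hy
    obtain ⟨h1, h2⟩ := hf p hx.1 q hx.2 p' hy.1 q' hy.2 h
    rw [h1, h2]
  have hRm : ∀ p ∈ P, ∀ q ∈ Q, p + δ • q ∈ R := fun p hp q hq =>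
    Finset.mem_image.2 ⟨(p, q), Finset.mem_product.2 ⟨hp, hq⟩, rfl⟩
  have main := blowup_count P Q (simFam ε T P) (simFam ε T Q) o (fun S hS => (ho S hS).1)
    (fun S hS => (ho S hS).2.1.inj) (fun S hS => (mem_simFam.1 hS).1)
    (fun S hS => ⟨(mem_simFam.1 hS).1, (mem_simFam.1 hS).2.1⟩) (simFam ε T R)
    (fun p q => p + δ • q) hf ?_ ?_
  · rw [← simCount_eq, ← simCount_eq, ← simCount_eq, hP, hQ, hPc, hQc] at main
    rw [← hR]
    exact main.trans (le_hGeo T ε R)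
  · intro S hS g hg
    have hG := hA S hS g (by simpa using hg)
    refine mem_simFam.2 ⟨?_, good_forms hG⟩
    intro x hx
    obtain ⟨i, _, rfl⟩ := Finset.mem_image.1 hx
    refine hRm _ ((mem_simFam.1 hS).1 ?_) _ (hg i)
    have : o S i ∈ (S : Set Plane) := by rw [(ho S hS).1]; exact ⟨i, rfl⟩
    exact this
  · intro p hp S hS
    obtain ⟨hS1, hS2, t, ht, ht1, ht2⟩ := mem_simFam.1 hS
    have hG := good_scale (ε := ε) (T := T) ⟨ht1, ht2⟩ p hδ
    have hS' : S = Finset.univ.image t := by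
      apply Finset.coe_injective; rw [ht]; simp
    have him : S.image (fun q => p + δ • q) = Finset.univ.image (fun i => p + δ • t i) := by
      rw [hS', Finset.image_image]; rfl
    refine mem_simFam.2 ⟨?_, ?_⟩
    · intro x hx
      obtain ⟨q, hq, rfl⟩ := Finset.mem_image.1 hx
      exact hRm p hp q (hS1 hq)
    · rw [him]; exact good_forms hG

lemma hGeo_three (T : Fin 3 → Plane) (hT : IsTriangle T) (ε : ℝ) (hε : 0 < ε) :
    1 ≤ hGeo 3 T ε := by
  classical
  have hG : Good ε T T := ⟨hT, Equiv.refl _, fun i => by simpa using hε⟩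
  obtain ⟨h1, h2⟩ := good_forms hG
  have := le_hGeo T ε (Finset.univ.image T)
  rw [h1] at this
  refine le_trans ?_ this
  rw [simCount_eq, Nat.one_le_iff_ne_zero]
  exact (Finset.card_pos.2 ⟨_, mem_simFam.2 ⟨Finset.Subset.refl _, h1, h2⟩⟩).ne'

lemma hGeo_avg (n : ℕ) (T : Fin 3 → Plane) (ε : ℝ) :
    (n + 1) * hGeo (n + 3) T ε ≤ (n + 4) * hGeo (n + 3) T ε ∧
    (n + 1) * hGeo (n + 4) T ε ≤ (n + 4) * hGeo (n + 3) T ε := by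
  classical
  refine ⟨Nat.mul_le_mul_right _ (by omega), ?_⟩
  obtain ⟨P, hPc, hP⟩ := exists_hGeo (n + 4) T ε
  have dc := Finset.sum_card_bipartiteAbove_eq_sum_card_bipartiteBelow
    (s := P) (t := simFam ε T P) (fun x S => x ∉ S)
  have l1 : ∀ x ∈ P, (Finset.bipartiteAbove (fun (x : Plane) S => x ∉ S) (simFam ε T P) x).card
      ≤ hGeo (n + 3) T ε := by
    intro x hx
    have hc : (P.erase x).card = n + 3 := by rw [Finset.card_erase_of_mem hx, hPc]; rfl
    rw [← hc]
    refine le_trans ?_ (le_hGeo T ε _)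
    rw [simCount_eq]
    apply Finset.card_le_card
    intro S hS
    simp only [Finset.mem_bipartiteAbove] at hS
    obtain ⟨h1, h2⟩ := mem_simFam.1 hS.1
    exact mem_simFam.2 ⟨Finset.subset_erase.2 ⟨h1, hS.2⟩, h2⟩
  have l2 : ∀ S ∈ simFam ε T P,
      (Finset.bipartiteBelow (fun (x : Plane) S => x ∉ S) P S).card = n + 1 := by
    intro S hS
    obtain ⟨h1, h2, _⟩ := mem_simFam.1 hS
    have : Finset.bipartiteBelow (fun (x : Plane) S => x ∉ S) P S = P \ S := by
      ext x; simp [Finset.mem_bipartiteBelow]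
    rw [this, Finset.card_sdiff_of_subset h1, hPc, h2]; rfl
  rw [Finset.sum_congr rfl l2] at dc
  have := Finset.sum_le_card_nsmul P _ _ l1
  rw [dc, hPc] at this
  simp only [Finset.sum_const, smul_eq_mul] at this
  rw [← simCount_eq, hP] at this
  linarith

lemma limit_core (h : ℕ → ℝ) (h0 : ∀ n, 0 ≤ h n) (hz : h 0 = 0) (hz1 : h 1 = 0) (hz2 : h 2 = 0)
    (avg : ∀ n : ℕ, ((n : ℝ) + 1) * h (n + 4) ≤ ((n : ℝ) + 4) * h (n + 3))
    (blow : ∀ n m : ℕ, h n * (m : ℝ) ^ 3 + n * h m ≤ h (n * m)) (h3 : 1 ≤ h 3) :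
    ∃ L : ℝ, 1 / 24 ≤ L ∧
      Filter.Tendsto (fun n : ℕ => h n / (n : ℝ) ^ 3) Filter.atTop (nhds L) ∧
      ∀ n : ℕ, h n ≤ L * ((n : ℝ) ^ 3 - (n : ℝ)) ∧
        L * ((n : ℝ) * ((n : ℝ) - 1) * ((n : ℝ) - 2)) ≤ h n := by
  let a : ℕ → ℝ := fun n => h (n + 3) / (((n : ℝ) + 3) * (n + 2) * (n + 1))
  have ha : Antitone a := by
    apply antitone_nat_of_succ_le
    intro n
    have := avg n
    simp only [a]
    push_cast
    rw [div_le_div_iff₀ (by positivity) (by positivity)]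
    have h2 : (0 : ℝ) ≤ ((n : ℝ) + 3) * (n + 2) := by positivity
    have := mul_le_mul_of_nonneg_left this h2
    have e : n + 1 + 3 = n + 4 := by ring
    rw [e]
    linarith
  have hb : BddBelow (Set.range a) := by
    refine ⟨0, ?_⟩
    rintro _ ⟨n, rfl⟩
    have := h0 (n + 3)
    simp only [a]
    positivity
  have ht := tendsto_atTop_ciInf ha hb
  have hle := ciInf_le hb
  set L := ⨅ i, a i with hL
  have tend : Filter.Tendsto (fun n : ℕ => h n / (n : ℝ) ^ 3) Filter.atTop (nhds L) := by
    rw [← Filter.tendsto_add_atTop_iff_nat 3]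
    have i0 : Filter.Tendsto (fun n : ℕ => ((n + 3 : ℕ) : ℝ)⁻¹) Filter.atTop (nhds 0) :=
      (Filter.tendsto_add_atTop_iff_nat (f := fun n : ℕ => (n : ℝ)⁻¹) 3).2
        tendsto_inv_atTop_nhds_zero_nat
    have := (ht.mul (tendsto_const_nhds (x := (1 : ℝ)).sub i0)).mul
      (tendsto_const_nhds (x := (1 : ℝ)).sub (i0.const_mul 2))
    simp only [sub_zero, mul_zero, mul_one] at this
    refine this.congr fun n => ?_
    simp only [a]
    push_cast
    field_simp
    ring
  have up : ∀ n : ℕ, h n ≤ L * ((n : ℝ) ^ 3 - (n : ℝ)) := by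
    intro n
    rcases Nat.eq_zero_or_pos n with rfl | hn
    · simp [hz]
    have hn' : (0 : ℝ) < n := by exact_mod_cast hn
    have t1 : Filter.Tendsto (fun m : ℕ => h (n * m) / ((n * m : ℕ) : ℝ) ^ 3)
        Filter.atTop (nhds L) :=
      tend.comp (Filter.tendsto_id.const_mul_atTop' hn)
    have t2 := (tend.const_mul (n : ℝ)).const_add (h n)
    have t3 := t1.mul_const ((n : ℝ) ^ 3)
    have := le_of_tendsto_of_tendsto t2 t3 (by
      filter_upwards [Filter.eventually_gt_atTop 0] with m hm
      have hm' : (0 : ℝ) < m := by exact_mod_cast hm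
      have b := blow n m
      have e1 : h n + n * (h m / (m : ℝ) ^ 3) = (h n * (m : ℝ) ^ 3 + n * h m) / (m : ℝ) ^ 3 := by
        field_simp
      have e2 : h (n * m) / ((n * m : ℕ) : ℝ) ^ 3 * (n : ℝ) ^ 3 = h (n * m) / (m : ℝ) ^ 3 := by
        push_cast
        field_simp
      rw [e1, e2]
      gcongr)
    linarith
  refine ⟨L, ?_, tend, fun n => ⟨up n, ?_⟩⟩
  · have := up 3
    norm_num at this
    linarith
  · match n with
    | 0 => simp [hz]
    | 1 => simp [hz1]
    | 2 => simp [hz2]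
    | n + 3 =>
      have := hle n
      simp only [a] at this
      rw [le_div_iff₀ (by positivity)] at this
      push_cast
      refine le_trans (le_of_eq ?_) this
      ring

lemma hGeo_small (n : ℕ) (hn : n < 3) (T : Fin 3 → Plane) (ε : ℝ) : hGeo n T ε = 0 := by
  obtain ⟨P, hPc, hP⟩ := exists_hGeo n T ε
  have := simCount_le ε T P
  rw [hPc, hP, Nat.choose_eq_zero_of_lt hn] at this
  omega

/-- For a non-degenerate triangle `T` and `0 < ε` smaller than every angle of `T`,
the sequence `h(n, T, ε)/n³` converges to some `L ≥ 1/24`, and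
`L·(n³ - n) ≥ h(n, T, ε) ≥ L·n·(n-1)·(n-2)` for every `n`. -/
theorem stmt_6 (T : Fin 3 → Plane) (hT : IsTriangle T)
    (ε : ℝ) (hε : 0 < ε) (hεsmall : ∀ i : Fin 3, ε < triAngle T i) :
    ∃ L : ℝ, 1 / 24 ≤ L ∧
      Filter.Tendsto (fun n : ℕ => (hGeo n T ε : ℝ) / (n : ℝ) ^ 3)
        Filter.atTop (nhds L) ∧
      ∀ n : ℕ, (hGeo n T ε : ℝ) ≤ L * ((n : ℝ) ^ 3 - (n : ℝ)) ∧
        L * ((n : ℝ) * ((n : ℝ) - 1) * ((n : ℝ) - 2)) ≤ (hGeo n T ε : ℝ) := by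
  apply limit_core (fun n => (hGeo n T ε : ℝ))
  · intro n; positivity
  · simp [hGeo_small 0]
  · simp [hGeo_small 1]
  · simp [hGeo_small 2]
  · intro n
    exact_mod_cast (hGeo_avg n T ε).2
  · intro n m
    exact_mod_cast hGeo_blowup n m T ε
  · exact_mod_cast hGeo_three T hT ε hε

end
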